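/- arXiv:1507.08988 — 6 statements merged into one kernel-verified Lean document; each statement's English description precedes it below -/
import Mathlib

section
/- For every solution of the backward Ricci flow system of class U1[Z,Z̄,1], the identity d/dt(A−B) = (A−B)(A+B)²/(ABD) holds on [0,T); consequently, if λ₁ = λ₂ then A(t) = B(t) for all t ∈ [0,T), and if λ₁ > λ₂ then A(t) > B(t) for all t ∈ [0,T). -/
open Real Set ENNReal

/-- The time domain `[0, T)` where `T ∈ (0, ∞]` is an extended nonnegative real. -/
def flowDomain (T : ℝ≥0∞) : Set ℝ := {t : ℝ | 0 ≤ t ∧ ENNReal.ofReal t < T}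

/-!
Subtracting the equations for `A` and `B` gives the scalar linear equation `f' = g f` for
`f = A - B`, where `g = (A + B)² / (ABD)` is continuous along the flow. The integrating factor
`exp (-∫ g)` solves it: `f b = exp (∫ x in a..b, g x) * f a`, so `f` vanishes identically or keeps
its sign.
-/

section LinearODE

variable {E : Type*} [NormedAddCommGroup E] [NormedSpace ℝ E] {a b : ℝ}

theorem hasDerivWithinAt_integral_of_continuousOn_uIcc [CompleteSpace E]
    {g : ℝ → E} (hg : ContinuousOn g (uIcc a b)) {t : ℝ} (ht : t ∈ uIcc a b) :
    HasDerivWithinAt (fun u => ∫ x in a..u, g x) (g t) (uIcc a b) t := by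
  have : Fact (t ∈ uIcc a b) := ⟨ht⟩
  have hint : IntervalIntegrable g MeasureTheory.volume a t :=
    (hg.mono (uIcc_subset_uIcc_left ht)).intervalIntegrable
  exact intervalIntegral.integral_hasDerivWithinAt_right hint
    (hg.stronglyMeasurableAtFilter_nhdsWithin measurableSet_uIcc t) (hg t ht)

theorem eq_exp_integral_smul_of_hasDerivWithinAt
    {f : ℝ → E} {g : ℝ → ℝ} {s : Set ℝ} (hs : s.OrdConnected) (hg : ContinuousOn g s)
    (hf : ∀ t ∈ s, HasDerivWithinAt f (g t • f t) s t) (ha : a ∈ s) (hb : b ∈ s) :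
    f b = exp (∫ x in a..b, g x) • f a := by
  have hsub : uIcc a b ⊆ s := hs.uIcc_subset ha hb
  have hderiv : ∀ t ∈ uIcc a b,
      HasDerivWithinAt (fun u => exp (-∫ x in a..u, g x) • f u) 0 (uIcc a b) t := by
    intro t ht
    have hint := hasDerivWithinAt_integral_of_continuousOn_uIcc (hg.mono hsub) ht
    refine (hint.neg.exp.smul ((hf t (hsub ht)).mono hsub)).congr_deriv ?_
    module
  have hconst : exp (-∫ x in a..b, g x) • f b = f a := by
    have hbound := (convex_uIcc a b).norm_image_sub_le_of_norm_hasDerivWithin_le hderiv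
      (fun _ _ => norm_zero.le) left_mem_uIcc right_mem_uIcc
    simpa [sub_eq_zero] using hbound
  rw [← hconst, smul_smul, ← exp_add, add_neg_cancel, exp_zero, one_smul]

end LinearODE

section Flow

variable {s : Set ℝ} {A B D : ℝ → ℝ}

theorem hasDerivWithinAt_sub_of_flow {t : ℝ} (hA_ne : A t ≠ 0) (hB_ne : B t ≠ 0) (hD_ne : D t ≠ 0)
    (hA : HasDerivWithinAt A ((A t ^ 2 - B t ^ 2) / (B t * D t)) s t)
    (hB : HasDerivWithinAt B ((B t ^ 2 - A t ^ 2) / (A t * D t)) s t) :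
    HasDerivWithinAt (fun x => A x - B x)
      ((A t - B t) * (A t + B t) ^ 2 / (A t * B t * D t)) s t := by
  refine (hA.sub hB).congr_deriv ?_
  field_simp
  ring

theorem sub_eq_exp_integral_mul_sub_of_flow (hs : s.OrdConnected)
    (hA_ne : ∀ t ∈ s, A t ≠ 0) (hB_ne : ∀ t ∈ s, B t ≠ 0) (hD_ne : ∀ t ∈ s, D t ≠ 0)
    (hA : ∀ t ∈ s, HasDerivWithinAt A ((A t ^ 2 - B t ^ 2) / (B t * D t)) s t)
    (hB : ∀ t ∈ s, HasDerivWithinAt B ((B t ^ 2 - A t ^ 2) / (A t * D t)) s t)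
    (hD : ContinuousOn D s) {a b : ℝ} (ha : a ∈ s) (hb : b ∈ s) :
    A b - B b = exp (∫ x in a..b, (A x + B x) ^ 2 / (A x * B x * D x)) * (A a - B a) := by
  have hAc : ContinuousOn A s := HasDerivWithinAt.continuousOn hA
  have hBc : ContinuousOn B s := HasDerivWithinAt.continuousOn hB
  have hrate : ContinuousOn (fun x => (A x + B x) ^ 2 / (A x * B x * D x)) s :=
    ((hAc.add hBc).pow 2).div ((hAc.mul hBc).mul hD) fun t ht =>
      mul_ne_zero (mul_ne_zero (hA_ne t ht) (hB_ne t ht)) (hD_ne t ht)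
  refine eq_exp_integral_smul_of_hasDerivWithinAt (f := fun x => A x - B x) hs hrate
    (fun t ht => ?_) ha hb
  refine (hasDerivWithinAt_sub_of_flow (hA_ne t ht) (hB_ne t ht) (hD_ne t ht)
    (hA t ht) (hB t ht)).congr_deriv ?_
  rw [smul_eq_mul, mul_comm_div, mul_div_assoc', mul_comm]

theorem stmt1_general (hs : s.OrdConnected) {a : ℝ} (ha : a ∈ s)
    (hA_ne : ∀ t ∈ s, A t ≠ 0) (hB_ne : ∀ t ∈ s, B t ≠ 0) (hD_ne : ∀ t ∈ s, D t ≠ 0)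
    (hA : ∀ t ∈ s, HasDerivWithinAt A ((A t ^ 2 - B t ^ 2) / (B t * D t)) s t)
    (hB : ∀ t ∈ s, HasDerivWithinAt B ((B t ^ 2 - A t ^ 2) / (A t * D t)) s t)
    (hD : ContinuousOn D s) :
    (∀ t ∈ s, HasDerivWithinAt (fun x => A x - B x)
      ((A t - B t) * (A t + B t) ^ 2 / (A t * B t * D t)) s t) ∧
    (A a = B a → ∀ t ∈ s, A t = B t) ∧
    (B a < A a → ∀ t ∈ s, B t < A t) := by
  have hsolve {t : ℝ} (ht : t ∈ s) :=
    sub_eq_exp_integral_mul_sub_of_flow hs hA_ne hB_ne hD_ne hA hB hD ha ht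
  refine ⟨fun t ht => hasDerivWithinAt_sub_of_flow (hA_ne t ht) (hB_ne t ht) (hD_ne t ht)
    (hA t ht) (hB t ht), fun h t ht => ?_, fun h t ht => ?_⟩
  · rw [← sub_eq_zero, hsolve ht, h, sub_self, mul_zero]
  · rw [← sub_pos, hsolve ht]
    exact mul_pos (exp_pos _) (sub_pos.2 h)

end Flow

theorem ordConnected_flowDomain (T : ℝ≥0∞) : (flowDomain T).OrdConnected :=
  ⟨fun _ hx _ hy _ hz =>
    ⟨hx.1.trans hz.1, (ENNReal.ofReal_le_ofReal hz.2).trans_lt hy.2⟩⟩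

theorem zero_mem_flowDomain {T : ℝ≥0∞} (hT : 0 < T) : 0 ∈ flowDomain T :=
  ⟨le_rfl, by rwa [ENNReal.ofReal_zero]⟩

/-- For every solution of the backward Ricci flow system of class `U1[Z,Z̄,1]`, the identity
`d/dt(A−B) = (A−B)(A+B)²/(ABD)` holds on `[0,T)`; consequently, if `λ₁ = λ₂` then `A = B`
on `[0,T)`, and if `λ₁ > λ₂` then `A > B` on `[0,T)`. -/
theorem stmt1 (k : ℝ) (T : ℝ≥0∞) (hT : 0 < T)
    (lam1 lam2 lam3 lam4 : ℝ)
    (hlam1 : 0 < lam1) (hlam2 : 0 < lam2) (hlam3 : 0 < lam3) (hlam4 : 0 < lam4)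
    (A B C D : ℝ → ℝ)
    (hpos : ∀ t ∈ flowDomain T, 0 < A t ∧ 0 < B t ∧ 0 < C t ∧ 0 < D t)
    (hA : ∀ t ∈ flowDomain T,
      HasDerivWithinAt A ((A t ^ 2 - B t ^ 2) / (B t * D t)) (flowDomain T) t)
    (hB : ∀ t ∈ flowDomain T,
      HasDerivWithinAt B ((B t ^ 2 - A t ^ 2) / (A t * D t)) (flowDomain T) t)
    (hC : ∀ t ∈ flowDomain T,
      HasDerivWithinAt C 0 (flowDomain T) t)
    (hD : ∀ t ∈ flowDomain T,
      HasDerivWithinAt D (-(((A t - B t) ^ 2 + 12 * k ^ 2 * (A t * B t)) / (A t * B t)))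
        (flowDomain T) t)
    (hA0 : A 0 = lam1) (hB0 : B 0 = lam2) (hC0 : C 0 = lam3) (hD0 : D 0 = lam4) :
    (∀ t ∈ flowDomain T,
      HasDerivWithinAt (fun s => A s - B s)
        ((A t - B t) * (A t + B t) ^ 2 / (A t * B t * D t)) (flowDomain T) t) ∧
    (lam1 = lam2 → ∀ t ∈ flowDomain T, A t = B t) ∧
    (lam1 > lam2 → ∀ t ∈ flowDomain T, A t > B t) := by
  subst hA0 hB0
  exact stmt1_general (ordConnected_flowDomain T) (zero_mem_flowDomain hT)
    (fun t ht => (hpos t ht).1.ne') (fun t ht => (hpos t ht).2.1.ne')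
    (fun t ht => (hpos t ht).2.2.2.ne') hA hB (HasDerivWithinAt.continuousOn hD)
end

section
/- The functions A(t) = λ₁(1 − 3λ₂t/(λ₁λ₄))^{1/3}, B(t) = λ₂(1 − 3λ₂t/(λ₁λ₄))^{−1/3}, C(t) = λ₃, D(t) = λ₄(1 − 3λ₂t/(λ₁λ₄))^{1/3} are everywhere positive on [0, λ₁λ₄/(3λ₂)) and solve the backward Ricci flow system of class U1[2,1] with μ = 0 on that interval with the initial values A(0)=λ₁, B(0)=λ₂, C(0)=λ₃, D(0)=λ₄. -/
open Real Set

/-- Explicit solution coefficient `A` for class `U1[2,1]`, `μ = 0`. -/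
noncomputable def A4 (lam1 lam2 lam4 t : ℝ) : ℝ :=
  lam1 * (1 - 3 * lam2 * t / (lam1 * lam4)) ^ ((1 : ℝ) / 3)

/-- Explicit solution coefficient `B` for class `U1[2,1]`, `μ = 0`. -/
noncomputable def B4 (lam1 lam2 lam4 t : ℝ) : ℝ :=
  lam2 * (1 - 3 * lam2 * t / (lam1 * lam4)) ^ (-(1 : ℝ) / 3)

/-- Explicit solution coefficient `C` for class `U1[2,1]`, `μ = 0`. -/
noncomputable def C4 (lam3 : ℝ) (_t : ℝ) : ℝ := lam3

/-- Explicit solution coefficient `D` for class `U1[2,1]`, `μ = 0`. -/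
noncomputable def D4 (lam1 lam2 lam4 t : ℝ) : ℝ :=
  lam4 * (1 - 3 * lam2 * t / (lam1 * lam4)) ^ ((1 : ℝ) / 3)

/-!
With `u = 1 - 3 λ₂ t / (λ₁ λ₄)` and `x = u ^ (1/3)`, the claimed solution is `A = λ₁ x`,
`B = λ₂ / x`, `D = λ₄ x`. Under this ansatz the equations for `A`, `B` and `D` all
become `x' = -(λ₂ / (λ₁ λ₄)) / x²`, that is `(x³)' = -3 λ₂ / (λ₁ λ₄)`, so that `x³` is affine
in `t`.
-/

theorem sign_mul_of_pos_right {R : Type*} [Ring R] [LinearOrder R] [IsStrictOrderedRing R]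
    (a : R) {x : R} (hx : 0 < x) : SignType.sign (a * x) = SignType.sign a := by
  rw [sign_mul, sign_pos hx, mul_one]

theorem sign_div_of_pos_right {K : Type*} [Field K] [LinearOrder K] [IsStrictOrderedRing K]
    (a : K) {x : K} (hx : 0 < x) : SignType.sign (a / x) = SignType.sign a := by
  rw [div_eq_mul_inv, sign_mul_of_pos_right a (inv_pos.2 hx)]

section Ansatz

variable {𝕜 : Type*} [NontriviallyNormedField 𝕜] {x : 𝕜 → 𝕜} {a b d t : 𝕜} {s : Set 𝕜}

theorem hasDerivWithinAt_const_mul_of_scale (ha : a ≠ 0)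
    (hx : HasDerivWithinAt x (-(b / (a * d)) / x t ^ 2) s t) :
    HasDerivWithinAt (fun τ ↦ a * x τ) (-(b / x t / (d * x t))) s t :=
  (hx.const_mul a).congr_deriv (by field_simp)

theorem hasDerivWithinAt_const_div_of_scale (hxt : x t ≠ 0)
    (hx : HasDerivWithinAt x (-(b / (a * d)) / x t ^ 2) s t) :
    HasDerivWithinAt (fun τ ↦ b / x τ) ((b / x t) ^ 2 / (a * x t * (d * x t))) s t := by
  have hinv := (hx.fun_inv hxt).const_mul b
  simp only [← div_eq_mul_inv] at hinv
  exact hinv.congr_deriv (by field_simp)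

end Ansatz

/-- The common base of the powers in `A4`, `B4` and `D4`. Where it is positive, it is the cube of
`flowScale`. -/
noncomputable def flowBase (lam1 lam2 lam4 t : ℝ) : ℝ := 1 - 3 * lam2 * t / (lam1 * lam4)

/-- The factor `x` by which the solution is scaled: `A` and `D` are multiplied by `x` and `B` is
divided by it. The cube root is a real power, hence meaningful only where `flowBase` is
nonnegative. -/
noncomputable def flowScale (lam1 lam2 lam4 t : ℝ) : ℝ :=
  flowBase lam1 lam2 lam4 t ^ ((1 : ℝ) / 3)

section FlowScale

variable {lam1 lam2 lam4 t : ℝ} {s : Set ℝ}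

theorem flowBase_pos_iff (h14 : 0 < lam1 * lam4) (h2 : 0 < lam2) :
    0 < flowBase lam1 lam2 lam4 t ↔ t < lam1 * lam4 / (3 * lam2) := by
  rw [flowBase, sub_pos, div_lt_one h14, lt_div_iff₀' (by positivity)]

theorem hasDerivAt_flowBase (lam1 lam2 lam4 t : ℝ) :
    HasDerivAt (flowBase lam1 lam2 lam4) (-(3 * lam2 / (lam1 * lam4))) t :=
  ((hasDerivAt_const_mul (3 * lam2)).div_const (lam1 * lam4)).const_sub 1

theorem flowScale_pos (ht : 0 < flowBase lam1 lam2 lam4 t) : 0 < flowScale lam1 lam2 lam4 t :=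
  rpow_pos_of_pos ht _

theorem hasDerivAt_flowScale (ht : 0 < flowBase lam1 lam2 lam4 t) :
    HasDerivAt (flowScale lam1 lam2 lam4)
      (-(lam2 / (lam1 * lam4)) / flowScale lam1 lam2 lam4 t ^ 2) t := by
  have rpow_sub_one_eq : flowBase lam1 lam2 lam4 t ^ ((1 : ℝ) / 3 - 1) =
      (flowScale lam1 lam2 lam4 t ^ 2)⁻¹ := by
    rw [flowScale, ← rpow_mul_natCast ht.le, ← rpow_neg ht.le]
    norm_num
  refine ((hasDerivAt_flowBase lam1 lam2 lam4 t).rpow_const (Or.inl ht.ne')).congr_deriv ?_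
  rw [rpow_sub_one_eq]
  ring

theorem B4_eq_div_flowScale (ht : 0 ≤ flowBase lam1 lam2 lam4 t) :
    B4 lam1 lam2 lam4 t = lam2 / flowScale lam1 lam2 lam4 t := by
  rw [B4, ← flowBase, neg_div, rpow_neg ht, ← flowScale, div_eq_mul_inv]

theorem hasDerivWithinAt_A4 (h1 : lam1 ≠ 0) (ht : 0 < flowBase lam1 lam2 lam4 t) :
    HasDerivWithinAt (A4 lam1 lam2 lam4) (-(B4 lam1 lam2 lam4 t / D4 lam1 lam2 lam4 t)) s t := by
  rw [B4_eq_div_flowScale ht.le]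
  exact hasDerivWithinAt_const_mul_of_scale h1 (hasDerivAt_flowScale ht).hasDerivWithinAt

theorem hasDerivWithinAt_B4 (hs : ∀ τ ∈ s, 0 < flowBase lam1 lam2 lam4 τ) (ht : t ∈ s) :
    HasDerivWithinAt (B4 lam1 lam2 lam4)
      (B4 lam1 lam2 lam4 t ^ 2 / (A4 lam1 lam2 lam4 t * D4 lam1 lam2 lam4 t)) s t := by
  rw [B4_eq_div_flowScale (hs t ht).le]
  exact (hasDerivWithinAt_const_div_of_scale (flowScale_pos (hs t ht)).ne'
    (hasDerivAt_flowScale (hs t ht)).hasDerivWithinAt).congr_of_mem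
    (fun τ hτ ↦ B4_eq_div_flowScale (hs τ hτ).le) ht

theorem hasDerivWithinAt_D4 (h4 : lam4 ≠ 0) (ht : 0 < flowBase lam1 lam2 lam4 t) :
    HasDerivWithinAt (D4 lam1 lam2 lam4) (-(B4 lam1 lam2 lam4 t / A4 lam1 lam2 lam4 t)) s t := by
  have hx := (hasDerivAt_flowScale ht).hasDerivWithinAt (s := s)
  rw [mul_comm lam1 lam4] at hx
  rw [B4_eq_div_flowScale ht.le]
  exact hasDerivWithinAt_const_mul_of_scale h4 hx

end FlowScale

theorem stmt4_general {lam1 lam2 lam4 : ℝ} (lam3 : ℝ) (h1 : lam1 ≠ 0) (h4 : lam4 ≠ 0)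
    {s : Set ℝ} (hs : ∀ t ∈ s, 0 < flowBase lam1 lam2 lam4 t) :
    (∀ t ∈ s,
      SignType.sign (A4 lam1 lam2 lam4 t) = SignType.sign lam1 ∧
      SignType.sign (B4 lam1 lam2 lam4 t) = SignType.sign lam2 ∧
      SignType.sign (C4 lam3 t) = SignType.sign lam3 ∧
      SignType.sign (D4 lam1 lam2 lam4 t) = SignType.sign lam4) ∧
    (∀ t ∈ s,
      HasDerivWithinAt (A4 lam1 lam2 lam4)
        (-(B4 lam1 lam2 lam4 t / D4 lam1 lam2 lam4 t)) s t ∧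
      HasDerivWithinAt (B4 lam1 lam2 lam4)
        (B4 lam1 lam2 lam4 t ^ 2 / (A4 lam1 lam2 lam4 t * D4 lam1 lam2 lam4 t)) s t ∧
      HasDerivWithinAt (C4 lam3) 0 s t ∧
      HasDerivWithinAt (D4 lam1 lam2 lam4)
        (-(B4 lam1 lam2 lam4 t / A4 lam1 lam2 lam4 t)) s t) ∧
    A4 lam1 lam2 lam4 0 = lam1 ∧ B4 lam1 lam2 lam4 0 = lam2 ∧
    C4 lam3 0 = lam3 ∧ D4 lam1 lam2 lam4 0 = lam4 := by
  refine ⟨fun t ht ↦ ?signs, fun t ht ↦ ?equations,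
    by simp [A4], by simp [B4], rfl, by simp [D4]⟩
  case signs =>
    have hx := flowScale_pos (hs t ht)
    rw [B4_eq_div_flowScale (hs t ht).le]
    exact ⟨sign_mul_of_pos_right lam1 hx, sign_div_of_pos_right lam2 hx, rfl,
      sign_mul_of_pos_right lam4 hx⟩
  case equations =>
    exact ⟨hasDerivWithinAt_A4 h1 (hs t ht), hasDerivWithinAt_B4 hs ht,
      hasDerivWithinAt_const .., hasDerivWithinAt_D4 h4 (hs t ht)⟩

/-- The explicit functions `A, B, C, D` above are everywhere positive on
`[0, λ₁λ₄/(3λ₂))` and solve the backward Ricci flow system of class `U1[2,1]` with `μ = 0`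
(`A' = −B/D`, `B' = B²/(AD)`, `C' = 0`, `D' = −B/A`) there, with initial values
`A(0)=λ₁`, `B(0)=λ₂`, `C(0)=λ₃`, `D(0)=λ₄`. -/
theorem stmt4 (lam1 lam2 lam3 lam4 : ℝ)
    (hlam1 : 0 < lam1) (hlam2 : 0 < lam2) (hlam3 : 0 < lam3) (hlam4 : 0 < lam4) :
    (∀ t ∈ Set.Ico (0 : ℝ) (lam1 * lam4 / (3 * lam2)),
      0 < A4 lam1 lam2 lam4 t ∧ 0 < B4 lam1 lam2 lam4 t ∧
      0 < C4 lam3 t ∧ 0 < D4 lam1 lam2 lam4 t) ∧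
    (∀ t ∈ Set.Ico (0 : ℝ) (lam1 * lam4 / (3 * lam2)),
      HasDerivWithinAt (A4 lam1 lam2 lam4)
        (-(B4 lam1 lam2 lam4 t / D4 lam1 lam2 lam4 t))
        (Set.Ico (0 : ℝ) (lam1 * lam4 / (3 * lam2))) t ∧
      HasDerivWithinAt (B4 lam1 lam2 lam4)
        (B4 lam1 lam2 lam4 t ^ 2 / (A4 lam1 lam2 lam4 t * D4 lam1 lam2 lam4 t))
        (Set.Ico (0 : ℝ) (lam1 * lam4 / (3 * lam2))) t ∧
      HasDerivWithinAt (C4 lam3) 0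
        (Set.Ico (0 : ℝ) (lam1 * lam4 / (3 * lam2))) t ∧
      HasDerivWithinAt (D4 lam1 lam2 lam4)
        (-(B4 lam1 lam2 lam4 t / A4 lam1 lam2 lam4 t))
        (Set.Ico (0 : ℝ) (lam1 * lam4 / (3 * lam2))) t) ∧
    A4 lam1 lam2 lam4 0 = lam1 ∧ B4 lam1 lam2 lam4 0 = lam2 ∧
    C4 lam3 0 = lam3 ∧ D4 lam1 lam2 lam4 0 = lam4 := by
  simpa only [sign_pos hlam1, sign_pos hlam2, sign_pos hlam3, sign_pos hlam4, sign_eq_one_iff] using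
    stmt4_general lam3 hlam1.ne' hlam4.ne' fun t ht ↦
      (flowBase_pos_iff (mul_pos hlam1 hlam4) hlam2).2 ht.2
end

section
/- For every solution of the backward Ricci flow system of class U1[2,1] with μ = 1, the product AB is conserved, A(t)B(t) = λ₁λ₂ for all t ∈ [0,T), and moreover D(t) = Λ · A(t) · exp(3A(t)²/(2λ₁λ₂)) for all t ∈ [0,T), where Λ = (λ₄/λ₁) · exp(−3λ₁/(2λ₂)). -/
open Real Set ENNReal

/-!
Both identities are first integrals: `(AB)' = 0` and, once `AB` is known to equal a constant `c`,
`((D / A) exp (-3A² / (2c)))' = 0`. The second one is found by dividing the equations for `D` and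
`A`, which gives the linear equation `dD/dA = 3D/B + D/A = (3A/c + 1/A) D`.
-/

theorem convex_flowDomain (T : ℝ≥0∞) : Convex ℝ (flowDomain T) :=
  (ordConnected_Ici.inter (ordConnected_Iio.preimage_mono ENNReal.ofReal_mono)).convex

theorem eq_of_hasDerivWithinAt_zero {𝕜 E : Type*} [RCLike 𝕜] [NormedAddCommGroup E]
    [NormedSpace 𝕜 E] {S : Set 𝕜} (hS : Convex ℝ S) {f : 𝕜 → E}
    (hf : ∀ x ∈ S, HasDerivWithinAt f 0 S x) {x y : 𝕜} (hx : x ∈ S) (hy : y ∈ S) :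
    f x = f y := by
  have hle : ‖f x - f y‖ ≤ 0 * ‖x - y‖ :=
    hS.norm_image_sub_le_of_norm_hasDerivWithin_le hf (fun _ _ => norm_zero.le) hy hx
  rwa [zero_mul, norm_le_zero_iff, sub_eq_zero] at hle

section FirstIntegrals

variable {S : Set ℝ} {A B D : ℝ → ℝ} {t : ℝ}

theorem hasDerivWithinAt_mul_zero_of_flow (hA_ne : A t ≠ 0)
    (hA : HasDerivWithinAt A (-(B t / D t)) S t)
    (hB : HasDerivWithinAt B (B t ^ 2 / (A t * D t)) S t) :
    HasDerivWithinAt (fun s => A s * B s) 0 S t := by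
  refine (hA.mul hB).congr_deriv ?_
  field_simp
  ring

theorem hasDerivWithinAt_div_mul_exp_zero_of_flow {c : ℝ} (hc : c ≠ 0) (hAB : A t * B t = c)
    (hA_ne : A t ≠ 0) (hD_ne : D t ≠ 0)
    (hA : HasDerivWithinAt A (-(B t / D t)) S t)
    (hD : HasDerivWithinAt D (-3 - B t / A t) S t) :
    HasDerivWithinAt (fun s => D s / A s * exp (-(3 * A s ^ 2 / (2 * c)))) 0 S t := by
  have hquot : HasDerivWithinAt (fun s => D s / A s) (-3 / A t) S t := by
    refine (hD.div hA hA_ne).congr_deriv ?_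
    field_simp
    ring
  have hexponent : HasDerivWithinAt (fun s => -(3 * A s ^ 2 / (2 * c))) (3 / D t) S t := by
    refine (((hA.pow 2).const_mul 3).div_const (2 * c)).neg.congr_deriv ?_
    rw [← hAB] at hc ⊢
    have hB_ne : B t ≠ 0 := right_ne_zero_of_mul hc
    field_simp
    norm_num
  refine (hquot.mul hexponent.exp).congr_deriv ?_
  field_simp
  ring

end FirstIntegrals

theorem stmt5_general {S : Set ℝ} (hS : Convex ℝ S) {t₀ : ℝ} (ht₀ : t₀ ∈ S) {A B D : ℝ → ℝ}
    (hA_ne : ∀ t ∈ S, A t ≠ 0) (hB_ne : B t₀ ≠ 0) (hD_ne : ∀ t ∈ S, D t ≠ 0)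
    (hA : ∀ t ∈ S, HasDerivWithinAt A (-(B t / D t)) S t)
    (hB : ∀ t ∈ S, HasDerivWithinAt B (B t ^ 2 / (A t * D t)) S t)
    (hD : ∀ t ∈ S, HasDerivWithinAt D (-3 - B t / A t) S t) :
    ∀ t ∈ S,
      A t * B t = A t₀ * B t₀ ∧
      D t = (D t₀ / A t₀ * exp (-(3 * A t₀) / (2 * B t₀))) * A t *
              exp (3 * A t ^ 2 / (2 * (A t₀ * B t₀))) := by
  have hAB : ∀ t ∈ S, A t * B t = A t₀ * B t₀ := fun t ht =>
    eq_of_hasDerivWithinAt_zero hS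
      (fun s hs => hasDerivWithinAt_mul_zero_of_flow (hA_ne s hs) (hA s hs) (hB s hs)) ht ht₀
  intro t ht
  refine ⟨hAB t ht, ?_⟩
  have hAt₀_ne : A t₀ ≠ 0 := hA_ne t₀ ht₀
  have hconserved :
      D t / A t * exp (-(3 * A t ^ 2 / (2 * (A t₀ * B t₀)))) =
        D t₀ / A t₀ * exp (-(3 * A t₀ ^ 2 / (2 * (A t₀ * B t₀)))) :=
    eq_of_hasDerivWithinAt_zero hS (fun s hs => hasDerivWithinAt_div_mul_exp_zero_of_flow
      (mul_ne_zero hAt₀_ne hB_ne) (hAB s hs) (hA_ne s hs) (hD_ne s hs) (hA s hs) (hD s hs)) ht ht₀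
  have hexponent : -(3 * A t₀) / (2 * B t₀) = -(3 * A t₀ ^ 2 / (2 * (A t₀ * B t₀))) := by
    field_simp
  rw [hexponent, ← hconserved, exp_neg]
  field_simp [hA_ne t ht]

/-- For every solution of the backward Ricci flow system of class `U1[2,1]` with `μ = 1`,
the product `AB` is conserved, `A(t)B(t) = λ₁λ₂`, and
`D(t) = Λ · A(t) · exp(3A(t)²/(2λ₁λ₂))` where `Λ = (λ₄/λ₁) · exp(−3λ₁/(2λ₂))`. -/
theorem stmt5 (T : ℝ≥0∞) (hT : 0 < T)
    (lam1 lam2 lam3 lam4 : ℝ)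
    (hlam1 : 0 < lam1) (hlam2 : 0 < lam2) (hlam3 : 0 < lam3) (hlam4 : 0 < lam4)
    (A B C D : ℝ → ℝ)
    (hpos : ∀ t ∈ flowDomain T, 0 < A t ∧ 0 < B t ∧ 0 < C t ∧ 0 < D t)
    (hA : ∀ t ∈ flowDomain T,
      HasDerivWithinAt A (-(B t / D t)) (flowDomain T) t)
    (hB : ∀ t ∈ flowDomain T,
      HasDerivWithinAt B (B t ^ 2 / (A t * D t)) (flowDomain T) t)
    (hC : ∀ t ∈ flowDomain T,
      HasDerivWithinAt C 0 (flowDomain T) t)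
    (hD : ∀ t ∈ flowDomain T,
      HasDerivWithinAt D (-3 - B t / A t) (flowDomain T) t)
    (hA0 : A 0 = lam1) (hB0 : B 0 = lam2) (hC0 : C 0 = lam3) (hD0 : D 0 = lam4) :
    ∀ t ∈ flowDomain T,
      A t * B t = lam1 * lam2 ∧
      D t = (lam4 / lam1 * Real.exp (-(3 * lam1) / (2 * lam2))) * A t *
              Real.exp (3 * A t ^ 2 / (2 * (lam1 * lam2))) := by
  subst hA0 hB0 hD0
  exact stmt5_general (convex_flowDomain T) (zero_mem_flowDomain hT)
    (fun t ht => (hpos t ht).1.ne') hlam2.ne' (fun t ht => (hpos t ht).2.2.2.ne') hA hB hD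
end

section
/- Let T₀ = min{λ₁λ₄/(3λ₂), λ₂λ₄/(3λ₃)}. The functions A(t) = λ₁(1 − 3λ₂t/(λ₁λ₄))^{1/3}, B(t) = λ₂(1 − 3λ₂t/(λ₁λ₄))^{−1/3}(1 − 3λ₃t/(λ₂λ₄))^{1/3}, C(t) = λ₃(1 − 3λ₃t/(λ₂λ₄))^{−1/3}, D(t) = λ₄(1 − 3λ₂t/(λ₁λ₄))^{1/3}(1 − 3λ₃t/(λ₂λ₄))^{1/3} are everywhere positive on [0,T₀) and solve the backward Ricci flow system of class U1[3] on that interval with initial values A(0)=λ₁, B(0)=λ₂, C(0)=λ₃, D(0)=λ₄. -/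
open Real Set

/-- Explicit solution coefficient `A` for class `U1[3]` (`Nil⁴`). -/
noncomputable def A6 (lam1 lam2 lam4 t : ℝ) : ℝ :=
  lam1 * (1 - 3 * lam2 * t / (lam1 * lam4)) ^ ((1 : ℝ) / 3)

/-- Explicit solution coefficient `B` for class `U1[3]` (`Nil⁴`). -/
noncomputable def B6 (lam1 lam2 lam3 lam4 t : ℝ) : ℝ :=
  lam2 * (1 - 3 * lam2 * t / (lam1 * lam4)) ^ (-(1 : ℝ) / 3) *
    (1 - 3 * lam3 * t / (lam2 * lam4)) ^ ((1 : ℝ) / 3)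

/-- Explicit solution coefficient `C` for class `U1[3]` (`Nil⁴`). -/
noncomputable def C6 (lam2 lam3 lam4 t : ℝ) : ℝ :=
  lam3 * (1 - 3 * lam3 * t / (lam2 * lam4)) ^ (-(1 : ℝ) / 3)

/-- Explicit solution coefficient `D` for class `U1[3]` (`Nil⁴`). -/
noncomputable def D6 (lam1 lam2 lam3 lam4 t : ℝ) : ℝ :=
  lam4 * (1 - 3 * lam2 * t / (lam1 * lam4)) ^ ((1 : ℝ) / 3) *
    (1 - 3 * lam3 * t / (lam2 * lam4)) ^ ((1 : ℝ) / 3)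

/-! Put `u ^ 3 = 1 - 3 λ₂ t / (λ₁ λ₄)` and `v ^ 3 = 1 - 3 λ₃ t / (λ₂ λ₄)`, so that
`u' = -(λ₂ / (λ₁ λ₄)) / u ^ 2` and `v' = -(λ₃ / (λ₂ λ₄)) / v ^ 2`. The coefficients are the
monomials `A = λ₁ u`, `B = λ₂ v / u`, `C = λ₃ / v`, `D = λ₄ u v`, and after substituting `u'` and
`v'` each equation of the system is an identity of rational functions in `u` and `v`. -/

/-- Positive solutions on `s` of the backward Ricci flow system of class `U1[3]`. Derivatives are
taken within `s`, hence are ordinary ones when `s` is open and one-sided at an endpoint of an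
interval. -/
structure IsBackwardRicciFlowOn (A B C D : ℝ → ℝ) (s : Set ℝ) : Prop where
  pos : ∀ t ∈ s, 0 < A t ∧ 0 < B t ∧ 0 < C t ∧ 0 < D t
  hasDerivWithinAt : ∀ t ∈ s,
    HasDerivWithinAt A (-(B t / D t)) s t ∧
    HasDerivWithinAt B ((B t ^ 2 - A t * C t) / (A t * D t)) s t ∧
    HasDerivWithinAt C (C t ^ 2 / (B t * D t)) s t ∧
    HasDerivWithinAt D (-(B t / A t) - C t / B t) s t

namespace IsBackwardRicciFlowOn

variable {A B C D A' B' C' D' u v : ℝ → ℝ} {s s' : Set ℝ}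

theorem mono (h : IsBackwardRicciFlowOn A B C D s) (hs : s' ⊆ s) :
    IsBackwardRicciFlowOn A B C D s' where
  pos t ht := h.pos t (hs ht)
  hasDerivWithinAt t ht :=
    let ⟨hA, hB, hC, hD⟩ := h.hasDerivWithinAt t (hs ht)
    ⟨hA.mono hs, hB.mono hs, hC.mono hs, hD.mono hs⟩

theorem congr (h : IsBackwardRicciFlowOn A B C D s) (hA : EqOn A' A s) (hB : EqOn B' B s)
    (hC : EqOn C' C s) (hD : EqOn D' D s) : IsBackwardRicciFlowOn A' B' C' D' s where
  pos t ht := by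
    rw [hA ht, hB ht, hC ht, hD ht]
    exact h.pos t ht
  hasDerivWithinAt t ht := by
    obtain ⟨dA, dB, dC, dD⟩ := h.hasDerivWithinAt t ht
    rw [hA ht, hB ht, hC ht, hD ht]
    exact ⟨dA.congr hA (hA ht), dB.congr hB (hB ht), dC.congr hC (hC ht), dD.congr hD (hD ht)⟩

theorem of_hasDerivWithinAt_div_sq {lam1 lam2 lam3 lam4 : ℝ}
    (hlam1 : 0 < lam1) (hlam2 : 0 < lam2) (hlam3 : 0 < lam3) (hlam4 : 0 < lam4)
    (hu : ∀ t ∈ s, 0 < u t) (hv : ∀ t ∈ s, 0 < v t)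
    (hu' : ∀ t ∈ s, HasDerivWithinAt u (-(lam2 / (lam1 * lam4)) / u t ^ 2) s t)
    (hv' : ∀ t ∈ s, HasDerivWithinAt v (-(lam3 / (lam2 * lam4)) / v t ^ 2) s t) :
    IsBackwardRicciFlowOn (fun t => lam1 * u t) (fun t => lam2 * (u t)⁻¹ * v t)
      (fun t => lam3 * (v t)⁻¹) (fun t => lam4 * u t * v t) s where
  pos t ht := by
    have := hu t ht
    have := hv t ht
    refine ⟨?_, ?_, ?_, ?_⟩ <;> positivity
  hasDerivWithinAt t ht := by
    have u_ne := (hu t ht).ne'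
    have v_ne := (hv t ht).ne'
    have du := hu' t ht
    have dv := hv' t ht
    refine ⟨(du.const_mul lam1).congr_deriv ?_,
      (((du.fun_inv u_ne).const_mul lam2).fun_mul dv).congr_deriv ?_,
      ((dv.fun_inv v_ne).const_mul lam3).congr_deriv ?_,
      ((du.const_mul lam4).fun_mul dv).congr_deriv ?_⟩ <;> field_simp
    all_goals ring

end IsBackwardRicciFlowOn

/-- The cube root of `1 - 3 * a * t / b`, the building block of the explicit solution. It is meant
for `0 < 1 - 3 * a * t / b`: at a negative base `Real.rpow` is not the real cube root. -/
noncomputable def cubeRootFactor (a b t : ℝ) : ℝ :=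
  (1 - 3 * a * t / b) ^ ((1 : ℝ) / 3)

section cubeRootFactor

variable {a b t : ℝ}

theorem one_sub_three_mul_div_pos (ha : 0 < a) (hb : 0 < b) (ht : t < b / (3 * a)) :
    0 < 1 - 3 * a * t / b := by
  rw [sub_pos, div_lt_one hb]
  exact (lt_div_iff₀' (by positivity)).1 ht

theorem cubeRootFactor_pos (h : 0 < 1 - 3 * a * t / b) : 0 < cubeRootFactor a b t :=
  rpow_pos_of_pos h _

theorem rpow_neg_one_third_eq_inv_cubeRootFactor (h : 0 ≤ 1 - 3 * a * t / b) :
    (1 - 3 * a * t / b) ^ (-(1 : ℝ) / 3) = (cubeRootFactor a b t)⁻¹ := by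
  rw [neg_div, rpow_neg h, cubeRootFactor]

theorem hasDerivAt_cubeRootFactor (h : 0 < 1 - 3 * a * t / b) :
    HasDerivAt (cubeRootFactor a b) (-(a / b) / cubeRootFactor a b t ^ 2) t := by
  have base_deriv : HasDerivAt (fun s => 1 - 3 * a * s / b) (-(3 * a / b)) t := by
    simpa using (((hasDerivAt_id t).const_mul (3 * a)).div_const b).const_sub 1
  have rpow_eq : (1 - 3 * a * t / b) ^ ((1 : ℝ) / 3 - 1) = (cubeRootFactor a b t ^ 2)⁻¹ := by
    rw [cubeRootFactor, ← rpow_mul_natCast h.le, ← rpow_neg h.le]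
    norm_num
  refine (base_deriv.rpow_const (p := 1 / 3) (Or.inl h.ne')).congr_deriv ?_
  rw [rpow_eq]
  ring

end cubeRootFactor

theorem stmt6_general (lam1 lam2 lam3 lam4 : ℝ)
    (hlam1 : 0 < lam1) (hlam2 : 0 < lam2) (hlam3 : 0 < lam3) (hlam4 : 0 < lam4) :
    IsBackwardRicciFlowOn (A6 lam1 lam2 lam4) (B6 lam1 lam2 lam3 lam4) (C6 lam2 lam3 lam4)
      (D6 lam1 lam2 lam3 lam4) (Iio (min (lam1 * lam4 / (3 * lam2)) (lam2 * lam4 / (3 * lam3)))) ∧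
    A6 lam1 lam2 lam4 0 = lam1 ∧ B6 lam1 lam2 lam3 lam4 0 = lam2 ∧
    C6 lam2 lam3 lam4 0 = lam3 ∧ D6 lam1 lam2 lam3 lam4 0 = lam4 := by
  set T₀ := min (lam1 * lam4 / (3 * lam2)) (lam2 * lam4 / (3 * lam3))
  have u_base_pos : ∀ t ∈ Iio T₀, 0 < 1 - 3 * lam2 * t / (lam1 * lam4) := fun t ht =>
    one_sub_three_mul_div_pos hlam2 (by positivity) (lt_min_iff.1 ht).1
  have v_base_pos : ∀ t ∈ Iio T₀, 0 < 1 - 3 * lam3 * t / (lam2 * lam4) := fun t ht =>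
    one_sub_three_mul_div_pos hlam3 (by positivity) (lt_min_iff.1 ht).2
  have monomial_flow := IsBackwardRicciFlowOn.of_hasDerivWithinAt_div_sq hlam1 hlam2 hlam3
    hlam4 (fun t ht => cubeRootFactor_pos (u_base_pos t ht))
    (fun t ht => cubeRootFactor_pos (v_base_pos t ht))
    (fun t ht => (hasDerivAt_cubeRootFactor (u_base_pos t ht)).hasDerivWithinAt)
    (fun t ht => (hasDerivAt_cubeRootFactor (v_base_pos t ht)).hasDerivWithinAt)
  refine ⟨monomial_flow.congr (fun _ _ => rfl) (fun t ht => ?_) (fun t ht => ?_)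
    (fun _ _ => rfl), ?_⟩
  · rw [B6, rpow_neg_one_third_eq_inv_cubeRootFactor (u_base_pos t ht).le]
    rfl
  · rw [C6, rpow_neg_one_third_eq_inv_cubeRootFactor (v_base_pos t ht).le]
  · simp [A6, B6, C6, D6]

/-- With `T₀ = min{λ₁λ₄/(3λ₂), λ₂λ₄/(3λ₃)}`, the explicit functions `A, B, C, D` above are
everywhere positive on `[0,T₀)` and solve the backward Ricci flow system of class `U1[3]`
(`A' = −B/D`, `B' = (B² − AC)/(AD)`, `C' = C²/(BD)`, `D' = −B/A − C/B`) on that interval,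
with initial values `A(0)=λ₁`, `B(0)=λ₂`, `C(0)=λ₃`, `D(0)=λ₄`. -/
theorem stmt6 (lam1 lam2 lam3 lam4 : ℝ)
    (hlam1 : 0 < lam1) (hlam2 : 0 < lam2) (hlam3 : 0 < lam3) (hlam4 : 0 < lam4) :
    (∀ t ∈ Set.Ico (0 : ℝ) (min (lam1 * lam4 / (3 * lam2)) (lam2 * lam4 / (3 * lam3))),
      0 < A6 lam1 lam2 lam4 t ∧ 0 < B6 lam1 lam2 lam3 lam4 t ∧
      0 < C6 lam2 lam3 lam4 t ∧ 0 < D6 lam1 lam2 lam3 lam4 t) ∧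
    (∀ t ∈ Set.Ico (0 : ℝ) (min (lam1 * lam4 / (3 * lam2)) (lam2 * lam4 / (3 * lam3))),
      HasDerivWithinAt (A6 lam1 lam2 lam4)
        (-(B6 lam1 lam2 lam3 lam4 t / D6 lam1 lam2 lam3 lam4 t))
        (Set.Ico (0 : ℝ) (min (lam1 * lam4 / (3 * lam2)) (lam2 * lam4 / (3 * lam3)))) t ∧
      HasDerivWithinAt (B6 lam1 lam2 lam3 lam4)
        ((B6 lam1 lam2 lam3 lam4 t ^ 2 - A6 lam1 lam2 lam4 t * C6 lam2 lam3 lam4 t) /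
          (A6 lam1 lam2 lam4 t * D6 lam1 lam2 lam3 lam4 t))
        (Set.Ico (0 : ℝ) (min (lam1 * lam4 / (3 * lam2)) (lam2 * lam4 / (3 * lam3)))) t ∧
      HasDerivWithinAt (C6 lam2 lam3 lam4)
        (C6 lam2 lam3 lam4 t ^ 2 / (B6 lam1 lam2 lam3 lam4 t * D6 lam1 lam2 lam3 lam4 t))
        (Set.Ico (0 : ℝ) (min (lam1 * lam4 / (3 * lam2)) (lam2 * lam4 / (3 * lam3)))) t ∧
      HasDerivWithinAt (D6 lam1 lam2 lam3 lam4)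
        (-(B6 lam1 lam2 lam3 lam4 t / A6 lam1 lam2 lam4 t) -
          C6 lam2 lam3 lam4 t / B6 lam1 lam2 lam3 lam4 t)
        (Set.Ico (0 : ℝ) (min (lam1 * lam4 / (3 * lam2)) (lam2 * lam4 / (3 * lam3)))) t) ∧
    A6 lam1 lam2 lam4 0 = lam1 ∧ B6 lam1 lam2 lam3 lam4 0 = lam2 ∧
    C6 lam2 lam3 lam4 0 = lam3 ∧ D6 lam1 lam2 lam3 lam4 0 = lam4 := by
  obtain ⟨flow, initial⟩ := stmt6_general lam1 lam2 lam3 lam4 hlam1 hlam2 hlam3 hlam4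
  have flow_Ico := flow.mono (Ico_subset_Iio_self (a := 0))
  exact ⟨flow_Ico.pos, flow_Ico.hasDerivWithinAt, initial⟩
end

section
/- Assume λ₂ = (1−α²)λ₃ and let T₀ = min{λ₁/4, λ₂²/(3(1−α²)λ₄)}. Then the functions A(t) = λ₁ − 4t, B(t) = (λ₂³ − 3(1−α²)λ₂λ₄t)^{1/3}, C(t) = (1−α²)^{−1}(λ₂³ − 3(1−α²)λ₂λ₄t)^{1/3}, D(t) = λ₂λ₄(λ₂³ − 3(1−α²)λ₂λ₄t)^{−1/3} are everywhere positive on [0,T₀) and solve the backward Ricci flow system of class U3I0, case (ii), on that interval with initial values A(0)=λ₁, B(0)=λ₂, C(0)=λ₃, D(0)=λ₄. -/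
open Real Set

/-- Explicit solution coefficient `A` for class `U3I0`, case (ii). -/
noncomputable def A11 (lam1 t : ℝ) : ℝ := lam1 - 4 * t

/-- Explicit solution coefficient `B` for class `U3I0`, case (ii). -/
noncomputable def B11 (α lam2 lam4 t : ℝ) : ℝ :=
  (lam2 ^ 3 - 3 * (1 - α ^ 2) * lam2 * lam4 * t) ^ ((1 : ℝ) / 3)

/-- Explicit solution coefficient `C` for class `U3I0`, case (ii). -/
noncomputable def C11 (α lam2 lam4 t : ℝ) : ℝ :=
  (1 - α ^ 2)⁻¹ * (lam2 ^ 3 - 3 * (1 - α ^ 2) * lam2 * lam4 * t) ^ ((1 : ℝ) / 3)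

/-- Explicit solution coefficient `D` for class `U3I0`, case (ii). -/
noncomputable def D11 (α lam2 lam4 t : ℝ) : ℝ :=
  lam2 * lam4 * (lam2 ^ 3 - 3 * (1 - α ^ 2) * lam2 * lam4 * t) ^ (-(1 : ℝ) / 3)

/-! On the slice `B = (1 - α²) C` the two squares in the equations for `B` and `C` cancel, and the
flow reduces to `A' = -4`, `B' = -D / C`, `C' = -D / B`, `D' = D² / (B C)`. The slice is
invariant, and `B D` is a constant `m` on it, so that `B' = -(1 - α²) m / B²`, that is,
`(B³)' = -3 (1 - α²) m`: the cube of `B` is affine in time. -/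

theorem hasDerivWithinAt_of_mul_eq_const {𝕜 : Type*} [NontriviallyNormedField 𝕜] {f g : 𝕜 → 𝕜}
    {f' m x : 𝕜} {s : Set 𝕜} (hf : HasDerivWithinAt f f' s x) (hf₀ : ∀ y ∈ s, f y ≠ 0)
    (hfg : ∀ y ∈ s, f y * g y = m) (hx : x ∈ s) :
    HasDerivWithinAt g (-(f' * g x / f x)) s x := by
  have hg : ∀ y ∈ s, g y = m * (f y)⁻¹ := fun y hy ↦
    (eq_mul_inv_iff_mul_eq₀ (hf₀ y hy)).2 ((mul_comm _ _).trans (hfg y hy))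
  refine (((hf.fun_inv (hf₀ x hx)).const_mul m).congr_of_mem hg hx).congr_deriv ?_
  rw [hg x hx]
  ring

theorem hasDerivWithinAt_rpow_one_div_natCast {f : ℝ → ℝ} {f' x : ℝ} {s : Set ℝ} {n : ℕ}
    (hn : n ≠ 0) (hf : HasDerivWithinAt f f' s x) (hx : 0 < f x) :
    HasDerivWithinAt (fun y ↦ f y ^ (1 / n : ℝ))
      (f' / (n * (f x ^ (1 / n : ℝ)) ^ (n - 1))) s x := by
  have hn' : (n : ℝ) ≠ 0 := Nat.cast_ne_zero.2 hn
  have hpow : ((f x ^ (1 / n : ℝ)) ^ (n - 1))⁻¹ = f x ^ (1 / n - 1 : ℝ) := by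
    rw [← rpow_mul_natCast hx.le, ← rpow_neg hx.le, Nat.cast_pred (Nat.pos_of_ne_zero hn)]
    congr 1
    field_simp
    ring
  refine (hf.rpow_const (Or.inl hx.ne')).congr_deriv ?_
  rw [← hpow]
  field_simp

/-- The backward Ricci flow system of class `U3I0`, case (ii), at the time `t`. Derivatives are
taken within the time set `s`, hence one-sided at its endpoints. -/
structure IsBackwardRicciFlowU3I0 (α : ℝ) (A B C D : ℝ → ℝ) (s : Set ℝ) (t : ℝ) : Prop where
  hasDerivWithinAt_A : HasDerivWithinAt A
    (-((B t ^ 2 + 2 * (1 + α ^ 2) * (B t * C t) + (1 - α ^ 2) ^ 2 * C t ^ 2) / (B t * C t))) s t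
  hasDerivWithinAt_B : HasDerivWithinAt B
    ((-(A t * D t) + B t ^ 2 - (1 - α ^ 2) ^ 2 * C t ^ 2) / (A t * C t)) s t
  hasDerivWithinAt_C : HasDerivWithinAt C
    ((-(A t * D t) - B t ^ 2 + (1 - α ^ 2) ^ 2 * C t ^ 2) / (A t * B t)) s t
  hasDerivWithinAt_D : HasDerivWithinAt D (D t ^ 2 / (B t * C t)) s t

namespace IsBackwardRicciFlowU3I0

variable {α m t : ℝ} {A B C D : ℝ → ℝ} {s : Set ℝ}

theorem of_reduced (hA₀ : A t ≠ 0) (hB₀ : B t ≠ 0) (hBC : B t = (1 - α ^ 2) * C t)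
    (hA : HasDerivWithinAt A (-4) s t) (hB : HasDerivWithinAt B (-(D t / C t)) s t)
    (hC : HasDerivWithinAt C (-(D t / B t)) s t)
    (hD : HasDerivWithinAt D (D t ^ 2 / (B t * C t)) s t) :
    IsBackwardRicciFlowU3I0 α A B C D s t := by
  have hC₀ : C t ≠ 0 := right_ne_zero_of_mul (hBC ▸ hB₀)
  have hsq : (1 - α ^ 2) ^ 2 * C t ^ 2 = B t ^ 2 := by rw [hBC, mul_pow]
  have hsum : B t ^ 2 + 2 * (1 + α ^ 2) * (B t * C t) + B t ^ 2 = 4 * (B t * C t) := by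
    linear_combination 2 * B t * hBC
  refine ⟨?_, ?_, ?_, hD⟩ <;> rw [hsq]
  · rwa [hsum, mul_div_cancel_right₀ _ (mul_ne_zero hB₀ hC₀)]
  · rwa [add_sub_cancel_right, neg_div, mul_div_mul_left _ _ hA₀]
  · rwa [sub_add_cancel, neg_div, mul_div_mul_left _ _ hA₀]

theorem of_conserved (ht : t ∈ s) (hA₀ : A t ≠ 0) (hB₀ : ∀ τ ∈ s, B τ ≠ 0)
    (hBC : ∀ τ ∈ s, B τ = (1 - α ^ 2) * C τ) (hBD : ∀ τ ∈ s, B τ * D τ = m)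
    (hA : HasDerivWithinAt A (-4) s t) (hB : HasDerivWithinAt B (-(D t / C t)) s t) :
    IsBackwardRicciFlowU3I0 α A B C D s t := by
  have hα : 1 - α ^ 2 ≠ 0 := left_ne_zero_of_mul (hBC t ht ▸ hB₀ t ht)
  have hC : HasDerivWithinAt C (-(D t / B t)) s t := by
    refine ((hB.const_mul (1 - α ^ 2)⁻¹).congr_of_mem
      (fun τ hτ ↦ (eq_inv_mul_iff_mul_eq₀ hα).2 (hBC τ hτ).symm) ht).congr_deriv ?_
    rw [hBC t ht, mul_neg, inv_mul_eq_div, div_div, mul_comm (C t)]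
  have hD : HasDerivWithinAt D (D t ^ 2 / (B t * C t)) s t :=
    (hasDerivWithinAt_of_mul_eq_const hB hB₀ hBD ht).congr_deriv (by ring)
  exact of_reduced hA₀ (hB₀ t ht) (hBC t ht) hA hB hC hD

end IsBackwardRicciFlowU3I0

/-- The affine function of time whose cube root is `B11`. -/
def radicand11 (α lam2 lam4 t : ℝ) : ℝ := lam2 ^ 3 - 3 * (1 - α ^ 2) * lam2 * lam4 * t

section ExplicitSolution

variable {α lam1 lam2 lam4 t : ℝ} {s : Set ℝ}

theorem radicand11_pos_iff (hα : 0 < 1 - α ^ 2) (hlam2 : 0 < lam2) (hlam4 : 0 < lam4) :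
    0 < radicand11 α lam2 lam4 t ↔ t < lam2 ^ 2 / (3 * (1 - α ^ 2) * lam4) := by
  have hfactor : radicand11 α lam2 lam4 t =
      lam2 * (lam2 ^ 2 - t * (3 * (1 - α ^ 2) * lam4)) := by
    unfold radicand11
    ring
  rw [hfactor, mul_pos_iff_of_pos_left hlam2, sub_pos, lt_div_iff₀ (by positivity)]

theorem A11_pos_iff : 0 < A11 lam1 t ↔ t < lam1 / 4 := by
  rw [A11, sub_pos, lt_div_iff₀' four_pos]

theorem B11_pos (h : 0 < radicand11 α lam2 lam4 t) : 0 < B11 α lam2 lam4 t :=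
  rpow_pos_of_pos h _

theorem C11_pos (hα : 0 < 1 - α ^ 2) (h : 0 < radicand11 α lam2 lam4 t) :
    0 < C11 α lam2 lam4 t :=
  mul_pos (inv_pos.2 hα) (B11_pos h)

theorem D11_pos (hlam : 0 < lam2 * lam4) (h : 0 < radicand11 α lam2 lam4 t) :
    0 < D11 α lam2 lam4 t :=
  mul_pos hlam (rpow_pos_of_pos h _)

theorem B11_eq_mul_C11 (hα : 1 - α ^ 2 ≠ 0) :
    B11 α lam2 lam4 t = (1 - α ^ 2) * C11 α lam2 lam4 t :=
  (mul_inv_cancel_left₀ hα _).symm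

theorem B11_mul_D11 (h : 0 < radicand11 α lam2 lam4 t) :
    B11 α lam2 lam4 t * D11 α lam2 lam4 t = lam2 * lam4 := by
  have hinv : radicand11 α lam2 lam4 t ^ (-1 / 3 : ℝ) = (B11 α lam2 lam4 t)⁻¹ := by
    rw [neg_div, rpow_neg h.le]
    rfl
  change B11 α lam2 lam4 t * (lam2 * lam4 * radicand11 α lam2 lam4 t ^ (-1 / 3 : ℝ)) = _
  rw [hinv, mul_left_comm, mul_inv_cancel₀ (B11_pos h).ne', mul_one]

theorem hasDerivAt_A11 : HasDerivAt (A11 lam1) (-4) t :=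
  (hasDerivAt_const_mul 4).const_sub lam1

theorem hasDerivAt_radicand11 :
    HasDerivAt (radicand11 α lam2 lam4) (-(3 * (1 - α ^ 2) * lam2 * lam4)) t :=
  (hasDerivAt_const_mul (3 * (1 - α ^ 2) * lam2 * lam4)).const_sub (lam2 ^ 3)

theorem hasDerivWithinAt_B11 (hα : 1 - α ^ 2 ≠ 0) (h : 0 < radicand11 α lam2 lam4 t) :
    HasDerivWithinAt (B11 α lam2 lam4) (-(D11 α lam2 lam4 t / C11 α lam2 lam4 t)) s t := by
  have hroot : HasDerivWithinAt (B11 α lam2 lam4)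
      (-(3 * (1 - α ^ 2) * lam2 * lam4) / (3 * B11 α lam2 lam4 t ^ 2)) s t :=
    hasDerivWithinAt_rpow_one_div_natCast three_ne_zero
      hasDerivAt_radicand11.hasDerivWithinAt h
  have hB₀ := (B11_pos h).ne'
  have hC₀ : C11 α lam2 lam4 t ≠ 0 := right_ne_zero_of_mul (B11_eq_mul_C11 hα ▸ hB₀)
  refine hroot.congr_deriv ?_
  rw [mul_assoc _ lam2, ← B11_mul_D11 h, B11_eq_mul_C11 hα]
  field_simp

theorem isBackwardRicciFlowU3I0_A11_B11_C11_D11 (hα : 1 - α ^ 2 ≠ 0) (ht : t ∈ s)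
    (hA₀ : A11 lam1 t ≠ 0) (h : ∀ τ ∈ s, 0 < radicand11 α lam2 lam4 τ) :
    IsBackwardRicciFlowU3I0 α (A11 lam1) (B11 α lam2 lam4) (C11 α lam2 lam4)
      (D11 α lam2 lam4) s t :=
  .of_conserved ht hA₀ (fun τ hτ ↦ (B11_pos (h τ hτ)).ne') (fun _ _ ↦ B11_eq_mul_C11 hα)
    (fun τ hτ ↦ B11_mul_D11 (h τ hτ)) hasDerivAt_A11.hasDerivWithinAt
    (hasDerivWithinAt_B11 hα (h t ht))

theorem A11_zero : A11 lam1 0 = lam1 := by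
  rw [A11, mul_zero, sub_zero]

theorem radicand11_zero : radicand11 α lam2 lam4 0 = lam2 ^ 3 := by
  rw [radicand11, mul_zero, sub_zero]

theorem B11_zero (hlam2 : 0 ≤ lam2) : B11 α lam2 lam4 0 = lam2 := by
  change radicand11 α lam2 lam4 0 ^ (1 / 3 : ℝ) = lam2
  rw [radicand11_zero, one_div]
  exact pow_rpow_inv_natCast hlam2 three_ne_zero

theorem C11_zero (hlam2 : 0 ≤ lam2) : C11 α lam2 lam4 0 = (1 - α ^ 2)⁻¹ * lam2 :=
  congrArg _ (B11_zero hlam2)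

theorem D11_zero (hlam2 : 0 < lam2) : D11 α lam2 lam4 0 = lam4 := by
  have hBD : B11 α lam2 lam4 0 * D11 α lam2 lam4 0 = lam2 * lam4 :=
    B11_mul_D11 (radicand11_zero.symm ▸ pow_pos hlam2 3)
  rw [B11_zero hlam2.le] at hBD
  exact mul_left_cancel₀ hlam2.ne' hBD

end ExplicitSolution

/-- Assume `λ₂ = (1−α²)λ₃` and let `T₀ = min{λ₁/4, λ₂²/(3(1−α²)λ₄)}`. Then the explicit
functions `A, B, C, D` above are everywhere positive on `[0,T₀)` and solve the backward
Ricci flow system of class `U3I0`, case (ii):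
`A' = −(B² + 2(1+α²)BC + (1−α²)²C²)/(BC)`, `B' = (−AD + B² − (1−α²)²C²)/(AC)`,
`C' = (−AD − B² + (1−α²)²C²)/(AB)`, `D' = D²/(BC)`,
with initial values `A(0)=λ₁`, `B(0)=λ₂`, `C(0)=λ₃`, `D(0)=λ₄`. -/
theorem stmt11 (α lam1 lam2 lam3 lam4 : ℝ)
    (hα₁ : -1 < α) (hα₂ : α < 1)
    (hlam1 : 0 < lam1) (hlam2 : 0 < lam2) (hlam3 : 0 < lam3) (hlam4 : 0 < lam4)
    (hrel : lam2 = (1 - α ^ 2) * lam3) :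
    (∀ t ∈ Set.Ico (0 : ℝ) (min (lam1 / 4) (lam2 ^ 2 / (3 * (1 - α ^ 2) * lam4))),
      0 < A11 lam1 t ∧ 0 < B11 α lam2 lam4 t ∧
      0 < C11 α lam2 lam4 t ∧ 0 < D11 α lam2 lam4 t) ∧
    (∀ t ∈ Set.Ico (0 : ℝ) (min (lam1 / 4) (lam2 ^ 2 / (3 * (1 - α ^ 2) * lam4))),
      HasDerivWithinAt (A11 lam1)
        (-((B11 α lam2 lam4 t ^ 2 +
            2 * (1 + α ^ 2) * (B11 α lam2 lam4 t * C11 α lam2 lam4 t) +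
            (1 - α ^ 2) ^ 2 * C11 α lam2 lam4 t ^ 2) /
          (B11 α lam2 lam4 t * C11 α lam2 lam4 t)))
        (Set.Ico (0 : ℝ) (min (lam1 / 4) (lam2 ^ 2 / (3 * (1 - α ^ 2) * lam4)))) t ∧
      HasDerivWithinAt (B11 α lam2 lam4)
        ((-(A11 lam1 t * D11 α lam2 lam4 t) + B11 α lam2 lam4 t ^ 2 -
            (1 - α ^ 2) ^ 2 * C11 α lam2 lam4 t ^ 2) /
          (A11 lam1 t * C11 α lam2 lam4 t))
        (Set.Ico (0 : ℝ) (min (lam1 / 4) (lam2 ^ 2 / (3 * (1 - α ^ 2) * lam4)))) t ∧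
      HasDerivWithinAt (C11 α lam2 lam4)
        ((-(A11 lam1 t * D11 α lam2 lam4 t) - B11 α lam2 lam4 t ^ 2 +
            (1 - α ^ 2) ^ 2 * C11 α lam2 lam4 t ^ 2) /
          (A11 lam1 t * B11 α lam2 lam4 t))
        (Set.Ico (0 : ℝ) (min (lam1 / 4) (lam2 ^ 2 / (3 * (1 - α ^ 2) * lam4)))) t ∧
      HasDerivWithinAt (D11 α lam2 lam4)
        (D11 α lam2 lam4 t ^ 2 / (B11 α lam2 lam4 t * C11 α lam2 lam4 t))
        (Set.Ico (0 : ℝ) (min (lam1 / 4) (lam2 ^ 2 / (3 * (1 - α ^ 2) * lam4)))) t) ∧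
    A11 lam1 0 = lam1 ∧ B11 α lam2 lam4 0 = lam2 ∧
    C11 α lam2 lam4 0 = lam3 ∧ D11 α lam2 lam4 0 = lam4 := by
  have hα : 0 < 1 - α ^ 2 := sub_pos.2 ((sq_lt_one_iff_abs_lt_one α).2 (abs_lt.2 ⟨hα₁, hα₂⟩))
  have hA : ∀ t ∈ Ico 0 (min (lam1 / 4) (lam2 ^ 2 / (3 * (1 - α ^ 2) * lam4))),
      0 < A11 lam1 t :=
    fun t ht ↦ A11_pos_iff.2 (lt_min_iff.1 ht.2).1
  have hrad : ∀ t ∈ Ico 0 (min (lam1 / 4) (lam2 ^ 2 / (3 * (1 - α ^ 2) * lam4))),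
      0 < radicand11 α lam2 lam4 t :=
    fun t ht ↦ (radicand11_pos_iff hα hlam2 hlam4).2 (lt_min_iff.1 ht.2).2
  refine ⟨fun t ht ↦ ⟨hA t ht, B11_pos (hrad t ht), C11_pos hα (hrad t ht),
    D11_pos (mul_pos hlam2 hlam4) (hrad t ht)⟩, fun t ht ↦ ?_,
    A11_zero, B11_zero hlam2.le, ?_, D11_zero hlam2⟩
  · obtain ⟨hA', hB', hC', hD'⟩ :=
      isBackwardRicciFlowU3I0_A11_B11_C11_D11 hα.ne' ht (hA t ht).ne' hrad
    exact ⟨hA', hB', hC', hD'⟩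
  · rw [C11_zero hlam2.le, hrel, inv_mul_cancel_left₀ hα.ne']
end

section
/- For every solution of the backward Ricci flow system of class U3S1, case (i), the following identities hold on [0,T): d/dt(AB) = −2(A+B+C), d/dt(AC) = 2(A−B−C), and d/dt(B(C−A)) = 4B. -/
open Real Set ENNReal

/-!
In a Milnor frame `[e₂, e₃] = l₁ e₁`, `[e₃, e₁] = l₂ e₂`, `[e₁, e₂] = l₃ e₃` of a three-dimensional
unimodular Lie group, the three equations of the backward Ricci flow of a diagonal metric are cyclic
permutations of one another. In the derivative of a product of two metric coefficients both
fractions reduce to fractions over the third coefficient, and the sum of their numerators is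
divisible by that coefficient. For `sl(2,ℝ)` one has `(l₁, l₂, l₃) = (1, 1, -1)`, and the third
identity is `(BC)' - (AB)' = 2(B - C - A) + 2(A + B + C) = 4B`.
-/

/-- Twice the Ricci curvature `Ric(e₁, e₁)` of the left-invariant metric with diagonal coefficients
`x, y, z` in a Milnor frame with structure constants `l₁, l₂, l₃`: the velocity of `x` under the
backward Ricci flow. Those of `y` and `z` are obtained by permuting the indices cyclically. The
value is `0`, without geometric meaning, if `y` or `z` vanishes. -/
def milnorRicciRate {K : Type*} [Field K] (l₁ l₂ l₃ x y z : K) : K :=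
  ((l₁ * x) ^ 2 - (l₂ * y - l₃ * z) ^ 2) / (y * z)

theorem milnorRicciRate_mul_add_mul_milnorRicciRate {K : Type*} [Field K] (l₁ l₂ l₃ : K)
    {x y z : K} (hx : x ≠ 0) (hy : y ≠ 0) (hz : z ≠ 0) :
    milnorRicciRate l₁ l₂ l₃ x y z * y + x * milnorRicciRate l₂ l₃ l₁ y z x =
      2 * l₃ * (l₁ * x + l₂ * y - l₃ * z) := by
  have hxy : milnorRicciRate l₁ l₂ l₃ x y z * y = ((l₁ * x) ^ 2 - (l₂ * y - l₃ * z) ^ 2) / z := by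
    rw [milnorRicciRate]
    field_simp
  have hyx : x * milnorRicciRate l₂ l₃ l₁ y z x = ((l₂ * y) ^ 2 - (l₃ * z - l₁ * x) ^ 2) / z := by
    rw [milnorRicciRate]
    field_simp
  rw [hxy, hyx, ← add_div, div_eq_iff hz]
  ring

section Flow

variable {𝕜 K : Type*} [NontriviallyNormedField 𝕜] [NormedField K] [NormedAlgebra 𝕜 K]
  {s : Set 𝕜} {t : 𝕜}

theorem hasDerivWithinAt_mul_of_milnorRicciRate {l₁ l₂ l₃ z : K} {X Y : 𝕜 → K}
    (hX₀ : X t ≠ 0) (hY₀ : Y t ≠ 0) (hz : z ≠ 0)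
    (hX : HasDerivWithinAt X (milnorRicciRate l₁ l₂ l₃ (X t) (Y t) z) s t)
    (hY : HasDerivWithinAt Y (milnorRicciRate l₂ l₃ l₁ (Y t) z (X t)) s t) :
    HasDerivWithinAt (fun r => X r * Y r) (2 * l₃ * (l₁ * X t + l₂ * Y t - l₃ * z)) s t :=
  (hX.mul hY).congr_deriv (milnorRicciRate_mul_add_mul_milnorRicciRate l₁ l₂ l₃ hX₀ hY₀ hz)

theorem stmt13_general {A B C : 𝕜 → K} (hA₀ : A t ≠ 0) (hB₀ : B t ≠ 0) (hC₀ : C t ≠ 0)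
    (hA : HasDerivWithinAt A ((A t ^ 2 - (B t + C t) ^ 2) / (B t * C t)) s t)
    (hB : HasDerivWithinAt B ((B t ^ 2 - (A t + C t) ^ 2) / (A t * C t)) s t)
    (hC : HasDerivWithinAt C ((C t ^ 2 - (A t - B t) ^ 2) / (A t * B t)) s t) :
    HasDerivWithinAt (fun r => A r * B r) (-2 * (A t + B t + C t)) s t ∧
      HasDerivWithinAt (fun r => A r * C r) (2 * (A t - B t - C t)) s t ∧
      HasDerivWithinAt (fun r => B r * (C r - A r)) (4 * B t) s t := by
  have hA' : HasDerivWithinAt A (milnorRicciRate 1 1 (-1) (A t) (B t) (C t)) s t :=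
    hA.congr_deriv (by rw [milnorRicciRate]; ring)
  have hB' : HasDerivWithinAt B (milnorRicciRate 1 (-1) 1 (B t) (C t) (A t)) s t :=
    hB.congr_deriv (by rw [milnorRicciRate]; ring)
  have hC' : HasDerivWithinAt C (milnorRicciRate (-1) 1 1 (C t) (A t) (B t)) s t :=
    hC.congr_deriv (by rw [milnorRicciRate]; ring)
  have hAB : HasDerivWithinAt (fun r => A r * B r) (-2 * (A t + B t + C t)) s t :=
    (hasDerivWithinAt_mul_of_milnorRicciRate hA₀ hB₀ hC₀ hA' hB').congr_deriv (by ring)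
  have hBC : HasDerivWithinAt (fun r => B r * C r) (2 * (B t - C t - A t)) s t :=
    (hasDerivWithinAt_mul_of_milnorRicciRate hB₀ hC₀ hA₀ hB' hC').congr_deriv (by ring)
  have hCA : HasDerivWithinAt (fun r => C r * A r) (2 * (A t - B t - C t)) s t :=
    (hasDerivWithinAt_mul_of_milnorRicciRate hC₀ hA₀ hB₀ hC' hA').congr_deriv (by ring)
  refine ⟨hAB, by simpa only [mul_comm] using hCA, ?_⟩
  have hsub : (fun r => B r * (C r - A r)) = fun r => B r * C r - A r * B r := by
    funext r
    ring
  rw [hsub]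
  exact (hBC.fun_sub hAB).congr_deriv (by ring)

end Flow

/-- For every solution of the backward Ricci flow system of class `U3S1`, case (i),
the identities `d/dt(AB) = −2(A+B+C)`, `d/dt(AC) = 2(A−B−C)` and `d/dt(B(C−A)) = 4B`
hold on `[0,T)`. -/
theorem stmt13 (T : ℝ≥0∞) (hT : 0 < T)
    (lam1 lam2 lam3 : ℝ)
    (hlam1 : 0 < lam1) (hlam2 : 0 < lam2) (hlam3 : 0 < lam3)
    (A B C : ℝ → ℝ)
    (hpos : ∀ t ∈ flowDomain T, 0 < A t ∧ 0 < B t ∧ 0 < C t)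
    (hA : ∀ t ∈ flowDomain T,
      HasDerivWithinAt A ((A t ^ 2 - (B t + C t) ^ 2) / (B t * C t)) (flowDomain T) t)
    (hB : ∀ t ∈ flowDomain T,
      HasDerivWithinAt B ((B t ^ 2 - (A t + C t) ^ 2) / (A t * C t)) (flowDomain T) t)
    (hC : ∀ t ∈ flowDomain T,
      HasDerivWithinAt C ((C t ^ 2 - (A t - B t) ^ 2) / (A t * B t)) (flowDomain T) t)
    (hA0 : A 0 = lam1) (hB0 : B 0 = lam2) (hC0 : C 0 = lam3) :
    ∀ t ∈ flowDomain T,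
      HasDerivWithinAt (fun s => A s * B s) (-2 * (A t + B t + C t)) (flowDomain T) t ∧
      HasDerivWithinAt (fun s => A s * C s) (2 * (A t - B t - C t)) (flowDomain T) t ∧
      HasDerivWithinAt (fun s => B s * (C s - A s)) (4 * B t) (flowDomain T) t := by
  intro t ht
  obtain ⟨hAt, hBt, hCt⟩ := hpos t ht
  exact stmt13_general hAt.ne' hBt.ne' hCt.ne' (hA t ht) (hB t ht) (hC t ht)
end
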